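/- If a skeleton strategy {r_t}_{t=1}^d bi-balances the depth-d complete binary tree (d ≥ 2), then both of its descendant sub-strategies are bi-balancing: the left sub-strategy r^L_t(q^{t-1}) := r_{t+1}(0 q^{t-1}), t = 1,…,d−1, bi-balances the depth-(d−1) complete binary tree with some value function, and likewise the right sub-strategy r^R_t(q^{t-1}) := r_{t+1}(1 q^{t-1}) bi-balances the depth-(d−1) complete binary tree with some value function. -/

import Mathlib

/-!
Prepending the first bet `b` to a sequence `q` splits the sum defining `V⁰(b q)` (or `V¹(b q)`)
into its first term, which depends only on `b` and `r₁`, and the value of `q` under the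
sub-strategy along `b` (`V0_cons`, `V1_cons`). For `d ≥ 2` the sequences `q` and `b q` have the
same last bit, so balance of the tree makes the value of `q` a constant minus that first term.
-/

/-- `V^0(q^d) = Σ_t (1−q_t)/(1−r_t(q^{t-1}))` for a decisive sequence `q^d ∈ {0,1}^d`. -/
noncomputable def V0 (d : ℕ) (r : (t : Fin d) → (Fin t → Bool) → ℝ)
    (q : Fin d → Bool) : ℝ :=
  ∑ t : Fin d, (1 - if q t then (1:ℝ) else 0) /
    (1 - r t (fun i => q (Fin.castLE t.2.le i)))

/-- `V^1(q^d) = Σ_t q_t/r_t(q^{t-1})` for a decisive sequence `q^d ∈ {0,1}^d`. -/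
noncomputable def V1 (d : ℕ) (r : (t : Fin d) → (Fin t → Bool) → ℝ)
    (q : Fin d → Bool) : ℝ :=
  ∑ t : Fin d, (if q t then (1:ℝ) else 0) / r t (fun i => q (Fin.castLE t.2.le i))

/-- The last bit `q_d` of `q^d`. -/
def lastBit (d : ℕ) (q : Fin d → Bool) : Bool :=
  if h : 0 < d then q ⟨d - 1, by omega⟩ else false

/-- `{r_t}` bi-balances the depth-`d` complete binary tree with value function
`(v0, v1)`. -/
def biBalances (d : ℕ) (r : (t : Fin d) → (Fin t → Bool) → ℝ) (v0 v1 : ℝ) : Prop :=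
  (∀ q : Fin d → Bool, lastBit d q = false → V0 d r q = v0) ∧
  (∀ q : Fin d → Bool, lastBit d q = true → V1 d r q = v1)

/-- The descendant sub-strategy of `{r_t}_{t=1}^d` along the first bet `b`:
`r^b_t(q^{t-1}) := r_{t+1}(b q^{t-1})`. -/
def subStrategy (d : ℕ) (r : (t : Fin d) → (Fin t → Bool) → ℝ) (b : Bool) :
    (t : Fin (d - 1)) → (Fin t → Bool) → ℝ :=
  fun t qs => r ⟨t.1 + 1, by have := t.isLt; omega⟩ (Fin.cons b qs)

/-- Prefixes of `b q` of positive length are `b` followed by prefixes of `q`. -/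
theorem cons_prefix {n k : ℕ} (b : Bool) (q : Fin n → Bool) (h : k ≤ n) :
    (fun i : Fin (k + 1) => (Fin.cons b q : Fin (n + 1) → Bool)
      (Fin.castLE (Nat.succ_le_succ h) i)) =
    Fin.cons b (fun i => q (Fin.castLE h i)) := by
  funext i
  refine Fin.cases ?_ (fun j => ?_) i <;> rfl

theorem V0_cons (n : ℕ) (r : (t : Fin (n + 1)) → (Fin t → Bool) → ℝ) (b : Bool)
    (q : Fin n → Bool) :
    V0 (n + 1) r (Fin.cons b q) =
      (1 - if b then (1:ℝ) else 0) / (1 - r 0 Fin.elim0) +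
        V0 n (subStrategy (n + 1) r b) q := by
  unfold V0
  rw [Fin.sum_univ_succ]
  congr 1
  · congr 3
    exact funext fun i => i.elim0
  · refine Finset.sum_congr rfl fun t _ => ?_
    exact congrArg (fun p => (1 - if q t then (1:ℝ) else 0) / (1 - r t.succ p))
      (cons_prefix b q t.2.le)

theorem V1_cons (n : ℕ) (r : (t : Fin (n + 1)) → (Fin t → Bool) → ℝ) (b : Bool)
    (q : Fin n → Bool) :
    V1 (n + 1) r (Fin.cons b q) =
      (if b then (1:ℝ) else 0) / r 0 Fin.elim0 +
        V1 n (subStrategy (n + 1) r b) q := by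
  unfold V1
  rw [Fin.sum_univ_succ]
  congr 1
  · congr 1
    exact congrArg (r 0) (funext fun i => i.elim0)
  · refine Finset.sum_congr rfl fun t _ => ?_
    exact congrArg (fun p => (if q t then (1:ℝ) else 0) / r t.succ p)
      (cons_prefix b q t.2.le)

theorem lastBit_cons (n : ℕ) (b : Bool) (q : Fin (n + 1) → Bool) :
    lastBit (n + 2) (Fin.cons b q) = lastBit (n + 1) q := by
  simp only [lastBit, Nat.succ_pos, dif_pos]
  rfl

theorem biBalances_subStrategy (n : ℕ) (r : (t : Fin (n + 2)) → (Fin t → Bool) → ℝ) (b : Bool)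
    {v0 v1 : ℝ} (h : biBalances (n + 2) r v0 v1) :
    biBalances (n + 1) (subStrategy (n + 2) r b)
      (v0 - (1 - if b then (1:ℝ) else 0) / (1 - r 0 Fin.elim0))
      (v1 - (if b then (1:ℝ) else 0) / r 0 Fin.elim0) := by
  constructor
  · intro q hq
    have := h.1 (Fin.cons b q) ((lastBit_cons n b q).trans hq)
    rw [V0_cons] at this
    exact eq_sub_of_add_eq' this
  · intro q hq
    have := h.2 (Fin.cons b q) ((lastBit_cons n b q).trans hq)
    rw [V1_cons] at this
    exact eq_sub_of_add_eq' this

/-- If a skeleton strategy bi-balances the depth-`d` complete binary tree (`d ≥ 2`),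
then both of its descendant sub-strategies bi-balance the depth-`(d−1)` complete
binary tree with some value functions. -/
theorem subtrees_bibalanced (d : ℕ) (hd : 2 ≤ d)
    (r : (t : Fin d) → (Fin t → Bool) → ℝ)
    (hr : ∀ (t : Fin d) (qs : Fin t → Bool), r t qs ∈ Set.Ioo (0:ℝ) 1)
    (hb : ∃ v0 v1 : ℝ, biBalances d r v0 v1) :
    (∃ v0 v1 : ℝ, biBalances (d - 1) (subStrategy d r false) v0 v1) ∧
    (∃ v0 v1 : ℝ, biBalances (d - 1) (subStrategy d r true) v0 v1) := by
  obtain ⟨v0, v1, h⟩ := hb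
  obtain ⟨n, rfl⟩ := Nat.exists_eq_add_of_le' hd
  exact ⟨⟨_, _, biBalances_subStrategy n r false h⟩, ⟨_, _, biBalances_subStrategy n r true h⟩⟩
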